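/- arXiv:2001.09825 — 2 statements merged into one kernel-verified Lean document; each statement's English description precedes it below -/
import Mathlib

section
/- Let n ≥ 2 be even and g ≥ 1. Then the coinvariants module (H^{⊗n})_{D_{2n}} is a free ℤ-module (in particular it is torsion-free), of rank (1/2)·N_{2g}(n) + (1/4)·(2g+1)·(2g)^{n/2}. -/
/-- Words of length `n` in the alphabet `Fin (2*g)`, i.e. index sets of basis tensors
of the `n`-fold tensor power of the free `ℤ`-module `H` on `2g` generators. -/
abbrev DWord (g n : ℕ) : Type := ZMod n → Fin (2 * g)

/-- The action of the generator `x` of the dihedral group `D_{2n}` on `H^{⊗n}`: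
`x·(a_1⊗⋯⊗a_n) = a_n⊗a_1⊗⋯⊗a_{n-1}` (cyclic rotation of basis tensors). -/
noncomputable def rotMap (g n : ℕ) : Module.End ℤ ((DWord g n) →₀ ℤ) :=
  Finsupp.lmapDomain ℤ ℤ (fun w : DWord g n => fun i => w (i - 1))

/-- The action of the generator `y` of the dihedral group `D_{2n}` on `H^{⊗n}`:
`y·(a_1⊗⋯⊗a_n) = (-1)^n · (a_n⊗⋯⊗a_1)` (reversal with sign). -/
noncomputable def revMap (g n : ℕ) : Module.End ℤ ((DWord g n) →₀ ℤ) :=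
  ((-1 : ℤ) ^ n) • Finsupp.lmapDomain ℤ ℤ (fun w : DWord g n => fun i => w (-i - 1))

/-- The submodule generated by all `v - σ·v` where `σ` ranges over the elements
`x^k` and `x^k y` of the dihedral group `D_{2n}`. -/
noncomputable def dihedralAug (g n : ℕ) : Submodule ℤ ((DWord g n) →₀ ℤ) :=
  Submodule.span ℤ {u | ∃ (k : ℕ) (v : (DWord g n) →₀ ℤ),
    u = v - (rotMap g n ^ k) v ∨ u = v - ((rotMap g n ^ k) * revMap g n) v}

/-- The coinvariants `(H^{⊗n})_{D_{2n}}`. -/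
abbrev DCoinv (g n : ℕ) := ((DWord g n) →₀ ℤ) ⧸ dihedralAug g n

/-!
Since `n` is even, the dihedral group permutes the basis tensors without signs, so the coinvariants
are free on the orbits of words (bracelets), and Burnside's lemma counts these. A word is fixed by
`σ` iff it is constant on the orbits of `⟨σ⟩` on the positions `ZMod n`. The rotation `r i` has
`n / addOrderOf i` such orbits, the action of `⟨r i⟩` being free. A reflection has `(n + f) / 2`
orbits, where `f` is its number of fixed positions, and for even `n` the reflections alternate
between `f = 0` and `f = 2`.
-/

open MulAction DihedralGroup

section PermutationCoinvariants

/-- The permutation representation of `G` on the free module `X →₀ k`. It plays the role of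
`Representation.ofMulAction`, which acts on the wrapper type `MonoidAlgebra k X` instead. -/
noncomputable def permRepresentation (k G X : Type*) [Semiring k] [Monoid G] [MulAction G X] :
    Representation k G (X →₀ k) where
  toFun σ := Finsupp.lmapDomain k k (σ • ·)
  map_one' := by ext; simp
  map_mul' σ τ := by ext; simp [mul_smul]

lemma permRepresentation_apply {k G X : Type*} [Semiring k] [Monoid G] [MulAction G X] (σ : G) :
    permRepresentation k G X σ = Finsupp.lmapDomain k k (σ • ·) := rfl

/-- The coinvariants of a permutation representation are free on the set of orbits. -/
noncomputable def permCoinvariantsEquiv (k G X : Type*) [CommRing k] [Group G] [MulAction G X] :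
    (permRepresentation k G X).Coinvariants ≃ₗ[k] (orbitRel.Quotient G X →₀ k) :=
  LinearEquiv.ofLinearMap
    (Representation.Coinvariants.lift _
      (Finsupp.lmapDomain k k (Quotient.mk (orbitRel G X))) fun σ => by
        ext x : 2
        simp [permRepresentation_apply,
          Quotient.sound (s := orbitRel G X) (mem_orbit x σ)])
    (Finsupp.linearCombination k (Quotient.lift
      (fun x => Representation.Coinvariants.mk (permRepresentation k G X) (Finsupp.single x 1)) (by
        rintro _ y ⟨σ, rfl⟩
        simpa [permRepresentation_apply] using
          Representation.Coinvariants.mk_self_apply (permRepresentation k G X) σ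
            (Finsupp.single y 1))))
    (Finsupp.lhom_ext' <| Quotient.ind fun x => by
      ext
      simp [Quotient.lift_mk])
    (by
      ext x : 3
      simp)

end PermutationCoinvariants

section Burnside

variable {G X A : Type*} [Group G] [MulAction G X]

lemma sum_natCard_fixedBy [Fintype G] [Finite X] :
    ∑ σ : G, Nat.card (fixedBy X σ) = Nat.card (orbitRel.Quotient G X) * Nat.card G := by
  rw [← Nat.card_sigma, ← Nat.card_prod]
  exact Nat.card_congr (sigmaFixedByEquivOrbitsProdGroup G X)

lemma sum_range_natCard_fixedBy_pow [Finite X] {σ : G} (hσ : IsOfFinOrder σ) :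
    ∑ j ∈ Finset.range (orderOf σ), Nat.card (fixedBy X (σ ^ j)) =
      Nat.card (orbitRel.Quotient (Subgroup.zpowers σ) X) * orderOf σ := by
  have : Fintype (Subgroup.zpowers σ) := Fintype.ofEquiv _ (finEquivZPowers hσ)
  rw [← Nat.card_zpowers, ← sum_natCard_fixedBy, Nat.card_zpowers, ← Fin.sum_univ_eq_sum_range
    (fun j => Nat.card (fixedBy X (σ ^ j))), ← (finEquivZPowers hσ).sum_comp]
  rfl

lemma two_mul_natCard_orbits_zpowers_of_orderOf_eq_two [Finite X] {σ : G} (hσ : orderOf σ = 2) :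
    2 * Nat.card (orbitRel.Quotient (Subgroup.zpowers σ) X) =
      Nat.card X + Nat.card (fixedBy X σ) := by
  have burnside := sum_range_natCard_fixedBy_pow (X := X) (orderOf_pos_iff.1 (hσ ▸ two_pos))
  rw [hσ, Finset.sum_range_succ, Finset.sum_range_one, pow_zero, pow_one, fixedBy_one_eq_univ,
    Nat.card_univ] at burnside
  rw [burnside, mul_comm]

attribute [local instance] arrowAction

lemma arrow_smul_apply (σ : G) (w : X → A) (x : X) : (σ • w) x = w (σ⁻¹ • x) := rfl

lemma mem_fixedBy_arrow_iff {σ : G} {w : X → A} :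
    w ∈ fixedBy (X → A) σ ↔ ∀ x, w (σ • x) = w x := by
  simp only [← fixedBy_inv (X → A) σ, mem_fixedBy, funext_iff, arrow_smul_apply, inv_inv]

lemma apply_smul_of_mem_fixedBy_arrow {σ : G} {w : X → A} (hw : w ∈ fixedBy (X → A) σ)
    (τ : Subgroup.zpowers σ) (x : X) : w (τ • x) = w x := by
  obtain ⟨_, j, rfl⟩ := τ
  exact mem_fixedBy_arrow_iff.1 (mem_fixedBy_zpow hw j) x

/-- Functions fixed by `σ` are the functions on the set of orbits of `⟨σ⟩`. -/
def fixedByArrowEquiv (σ : G) :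
    fixedBy (X → A) σ ≃ (orbitRel.Quotient (Subgroup.zpowers σ) X → A) where
  toFun w := Quotient.lift w.1 fun _ y ⟨τ, h⟩ => h ▸ apply_smul_of_mem_fixedBy_arrow w.2 τ y
  invFun f := ⟨fun x => f (Quotient.mk _ x), mem_fixedBy_arrow_iff.2 fun _ => congrArg f <|
    Quotient.sound ⟨⟨σ, Subgroup.mem_zpowers σ⟩, rfl⟩⟩
  left_inv _ := rfl
  right_inv _ := funext <| Quotient.ind fun _ => rfl

lemma natCard_fixedBy_arrow [Finite X] (σ : G) :
    Nat.card (fixedBy (X → A) σ) =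
      Nat.card A ^ Nat.card (orbitRel.Quotient (Subgroup.zpowers σ) X) := by
  rw [Nat.card_congr (fixedByArrowEquiv σ), Nat.card_fun]

end Burnside

lemma sum_apply_addOrderOf {C M : Type*} [AddGroup C] [IsAddCyclic C] [Fintype C]
    [AddCommMonoid M] (f : ℕ → M) :
    ∑ c : C, f (addOrderOf c) = ∑ d ∈ (Fintype.card C).divisors, d.totient • f d := by
  have order_mem : ∀ c ∈ (Finset.univ : Finset C), addOrderOf c ∈ (Fintype.card C).divisors :=
    fun c _ => Nat.mem_divisors.2 ⟨addOrderOf_dvd_card, Fintype.card_ne_zero⟩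
  rw [← Finset.sum_fiberwise_of_maps_to' order_mem]
  refine Finset.sum_congr rfl fun d hd => ?_
  rw [Finset.sum_const, IsAddCyclic.card_addOrderOf_eq_totient (Nat.dvd_of_mem_divisors hd)]

section DihedralPositions

variable {n : ℕ}

/-- The action of the dihedral group on the positions of a cyclic word: `r i` translates by `i`, and
`sr 0` is the reversal `k ↦ -1 - k`, which exchanges positions `0` and `n - 1`. -/
instance dihedralPositionAction : MulAction (DihedralGroup n) (ZMod n) where
  smul
    | r i, k => k + i
    | sr i, k => -1 - i - k
  one_smul := add_zero
  mul_smul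
    | r i, r j, k => show k + (i + j) = k + j + i by ring
    | r i, sr j, k => show -1 - (j - i) - k = -1 - j - k + i by ring
    | sr i, r j, k => show -1 - (i + j) - k = -1 - i - (k + j) by ring
    | sr i, sr j, k => show k + (j - i) = -1 - i - (-1 - j - k) by ring

lemma dihedral_r_smul (i k : ZMod n) : r i • k = k + i := rfl

lemma dihedral_sr_smul (i k : ZMod n) : sr i • k = -1 - i - k := rfl

lemma sum_dihedralGroup {M : Type*} [AddCommMonoid M] [NeZero n] (f : DihedralGroup n → M) :
    ∑ σ, f σ = ∑ i, f (r i) + ∑ i, f (sr i) := by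
  rw [← equivSum.symm.sum_comp, Fintype.sum_sum_type]
  rfl

lemma stabilizer_zpowers_r (i k : ZMod n) : stabilizer (Subgroup.zpowers (r i)) k = ⊥ := by
  refine (Subgroup.eq_bot_iff_forall _).2 ?_
  rintro ⟨_, j, rfl⟩ hj
  have hj : k + i * j = k := by simpa [Subgroup.mk_smul, dihedral_r_smul] using hj
  simpa [Subtype.ext_iff, ← r_zero] using hj

lemma mem_fixedBy_zmod_sr_iff {i k : ZMod n} : k ∈ fixedBy (ZMod n) (sr i) ↔ 2 * k = -1 - i := by
  rw [mem_fixedBy, dihedral_sr_smul, sub_eq_iff_eq_add, two_mul, eq_comm]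

lemma natCard_fixedBy_zmod_sr_two_mul (hn : Even n) (b : ZMod n) :
    Nat.card (fixedBy (ZMod n) (sr (2 * b))) = 0 := by
  have : IsEmpty (fixedBy (ZMod n) (sr (2 * b))) := by
    refine ⟨fun ⟨k, hk⟩ => ?_⟩
    have eq_mod_two := congrArg (ZMod.castHom hn.two_dvd (ZMod 2)) (mem_fixedBy_zmod_sr_iff.1 hk)
    simp only [map_sub, map_neg, map_mul, map_ofNat, map_one] at eq_mod_two
    rw [show (2 : ZMod 2) = 0 from rfl] at eq_mod_two
    simp at eq_mod_two
  exact Nat.card_of_isEmpty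

variable [NeZero n]

lemma orderOf_r_eq_addOrderOf (i : ZMod n) : orderOf (r i) = addOrderOf i := by
  rw [orderOf_r, ← ZMod.addOrderOf_coe _ (NeZero.ne n), ZMod.natCast_zmod_val]

lemma natCard_orbits_zpowers_r (i : ZMod n) :
    Nat.card (orbitRel.Quotient (Subgroup.zpowers (r i)) (ZMod n)) = n / addOrderOf i := by
  have card_eq := Nat.card_congr (selfEquivOrbitsQuotientProd (stabilizer_zpowers_r i))
  rw [Nat.card_zmod, Nat.card_prod, Nat.card_zpowers, orderOf_r_eq_addOrderOf] at card_eq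
  exact (Nat.div_eq_of_eq_mul_left (addOrderOf_pos i) card_eq).symm

lemma natCard_fixedBy_zmod_sr_two_mul_add_one (hn : Even n) (b : ZMod n) :
    Nat.card (fixedBy (ZMod n) (sr (2 * b + 1))) = 2 := by
  have translate_mem_ker (k : ZMod n) : k ∈ fixedBy (ZMod n) (sr (2 * b + 1)) ↔
      k + (b + 1) ∈ (nsmulAddMonoidHom 2 : ZMod n →+ ZMod n).ker := by
    rw [mem_fixedBy_zmod_sr_iff, AddMonoidHom.mem_ker, nsmulAddMonoidHom_apply, nsmul_eq_mul,
      ← sub_eq_zero]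
    push_cast
    ring_nf
  rw [Nat.card_congr ((Equiv.addRight (b + 1)).subtypeEquiv translate_mem_ker),
    IsAddCyclic.card_nsmulAddMonoidHom_ker, Nat.card_zmod, Nat.gcd_eq_right hn.two_dvd]

lemma natCard_orbits_zpowers_sr_two_mul (hn : Even n) (b : ZMod n) :
    Nat.card (orbitRel.Quotient (Subgroup.zpowers (sr (2 * b))) (ZMod n)) = n / 2 := by
  have card_eq := two_mul_natCard_orbits_zpowers_of_orderOf_eq_two (X := ZMod n)
    (orderOf_sr (2 * b))
  rw [Nat.card_zmod, natCard_fixedBy_zmod_sr_two_mul hn] at card_eq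
  omega

lemma natCard_orbits_zpowers_sr_two_mul_add_one (hn : Even n) (b : ZMod n) :
    Nat.card (orbitRel.Quotient (Subgroup.zpowers (sr (2 * b + 1))) (ZMod n)) = n / 2 + 1 := by
  have card_eq := two_mul_natCard_orbits_zpowers_of_orderOf_eq_two (X := ZMod n)
    (orderOf_sr (2 * b + 1))
  rw [Nat.card_zmod, natCard_fixedBy_zmod_sr_two_mul_add_one hn] at card_eq
  omega

end DihedralPositions

section Bracelets

attribute [local instance] arrowAction

variable {n : ℕ} {A : Type*}

lemma sum_natCard_fixedBy_arrow_r [NeZero n] :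
    ∑ i : ZMod n, Nat.card (fixedBy (ZMod n → A) (r i)) =
      ∑ d ∈ n.divisors, d.totient * Nat.card A ^ (n / d) := by
  simp only [natCard_fixedBy_arrow, natCard_orbits_zpowers_r]
  rw [sum_apply_addOrderOf fun d => Nat.card A ^ (n / d), ZMod.card]
  simp only [smul_eq_mul]

lemma natCard_fixedBy_arrow_sr_add_succ [NeZero n] (hn : Even n) (i : ZMod n) :
    Nat.card (fixedBy (ZMod n → A) (sr i)) + Nat.card (fixedBy (ZMod n → A) (sr (i + 1))) =
      (Nat.card A + 1) * Nat.card A ^ (n / 2) := by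
  obtain ⟨c, rfl⟩ := ZMod.intCast_surjective i
  obtain ⟨b, rfl | rfl⟩ := c.even_or_odd'
  · push_cast
    simp only [natCard_fixedBy_arrow, natCard_orbits_zpowers_sr_two_mul hn,
      natCard_orbits_zpowers_sr_two_mul_add_one hn]
    ring
  · have next_even : ((2 * b + 1 : ℤ) : ZMod n) + 1 = 2 * (b + 1) := by
      push_cast
      ring
    rw [next_even]
    push_cast
    simp only [natCard_fixedBy_arrow, natCard_orbits_zpowers_sr_two_mul hn,
      natCard_orbits_zpowers_sr_two_mul_add_one hn]
    ring

lemma two_mul_sum_natCard_fixedBy_arrow_sr [NeZero n] (hn : Even n) :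
    2 * ∑ i : ZMod n, Nat.card (fixedBy (ZMod n → A) (sr i)) =
      n * (Nat.card A + 1) * Nat.card A ^ (n / 2) := by
  have sum_shift := Equiv.sum_comp (Equiv.addRight (1 : ZMod n))
    fun i => Nat.card (fixedBy (ZMod n → A) (sr i))
  calc
    _ = ∑ i : ZMod n, (Nat.card (fixedBy (ZMod n → A) (sr i)) +
          Nat.card (fixedBy (ZMod n → A) (sr (i + 1)))) := by
      rw [Finset.sum_add_distrib, two_mul]
      exact congrArg _ sum_shift.symm
    _ = _ := by
      simp only [natCard_fixedBy_arrow_sr_add_succ hn, Finset.sum_const,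
        Finset.card_univ, ZMod.card, smul_eq_mul, mul_assoc]

variable (n A) in
/-- Bracelets of length `n` with beads in `A`: cyclic words up to rotation and reflection. -/
abbrev Bracelet : Type _ := orbitRel.Quotient (DihedralGroup n) (ZMod n → A)

theorem four_mul_natCard_bracelet [NeZero n] [Finite A] (hn : Even n) :
    4 * n * Nat.card (Bracelet n A) =
      2 * (∑ d ∈ n.divisors, d.totient * Nat.card A ^ (n / d)) +
        n * (Nat.card A + 1) * Nat.card A ^ (n / 2) := by
  have burnside := sum_natCard_fixedBy (G := DihedralGroup n) (X := ZMod n → A)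
  rw [sum_dihedralGroup, sum_natCard_fixedBy_arrow_r, DihedralGroup.nat_card] at burnside
  rw [← two_mul_sum_natCard_fixedBy_arrow_sr hn, ← mul_add, burnside]
  ring

end Bracelets

section DihedralCoinvariants

attribute [local instance] arrowAction

variable (g n : ℕ)

local notation "ρ" => permRepresentation ℤ (DihedralGroup n) (DWord g n)

lemma rotMap_eq_permRepresentation : rotMap g n = ρ (r 1) := by
  rw [permRepresentation_apply, rotMap]
  congr 1
  funext w i
  rw [arrow_smul_apply, inv_r, dihedral_r_smul, sub_eq_add_neg]

lemma rotMap_pow_eq_permRepresentation (j : ℕ) : rotMap g n ^ j = ρ (r j) := by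
  rw [rotMap_eq_permRepresentation, ← map_pow, r_one_pow]

variable {n}

lemma revMap_eq_permRepresentation (hn : Even n) : revMap g n = ρ (sr 0) := by
  rw [permRepresentation_apply, revMap, hn.neg_one_pow, one_smul]
  congr 1
  funext w i
  rw [arrow_smul_apply, inv_sr, dihedral_sr_smul, sub_zero, neg_sub_comm]

lemma rotMap_pow_mul_revMap_eq_permRepresentation (hn : Even n) (j : ℕ) :
    rotMap g n ^ j * revMap g n = ρ (sr (-j)) := by
  rw [rotMap_pow_eq_permRepresentation, revMap_eq_permRepresentation g hn, ← map_mul, r_mul_sr,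
    zero_sub]

variable [NeZero n]

lemma sub_permRepresentation_mem_dihedralAug (hn : Even n) (σ : DihedralGroup n)
    (v : DWord g n →₀ ℤ) : v - ρ σ v ∈ dihedralAug g n := by
  apply Submodule.subset_span
  obtain i | i := σ
  · exact ⟨i.val, v, Or.inl (by rw [rotMap_pow_eq_permRepresentation, ZMod.natCast_zmod_val])⟩
  · exact ⟨(-i).val, v, Or.inr (by
      rw [rotMap_pow_mul_revMap_eq_permRepresentation g hn, ZMod.natCast_zmod_val, neg_neg])⟩

lemma dihedralAug_eq_coinvariants_ker (hn : Even n) :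
    dihedralAug g n = Representation.Coinvariants.ker ρ := by
  refine le_antisymm (Submodule.span_le.2 ?_) (Submodule.span_le.2 ?_)
  · rintro _ ⟨j, v, rfl | rfl⟩
    · rw [rotMap_pow_eq_permRepresentation, ← neg_sub]
      exact neg_mem (Representation.Coinvariants.sub_mem_ker _ v)
    · rw [rotMap_pow_mul_revMap_eq_permRepresentation g hn, ← neg_sub]
      exact neg_mem (Representation.Coinvariants.sub_mem_ker _ v)
  · rintro _ ⟨⟨σ, v⟩, rfl⟩
    exact sub_mem_comm_iff.1 (sub_permRepresentation_mem_dihedralAug g hn σ v)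

/-- For even `n` the dihedral coinvariants are free on bracelets with `2g` kinds of beads. -/
noncomputable def dCoinvEquivBracelet (hn : Even n) :
    DCoinv g n ≃ₗ[ℤ] (Bracelet n (Fin (2 * g)) →₀ ℤ) :=
  (Submodule.quotEquivOfEq _ _ (dihedralAug_eq_coinvariants_ker g hn)).trans
    (permCoinvariantsEquiv ℤ (DihedralGroup n) (DWord g n))

end DihedralCoinvariants

/-- For `n ≥ 2` even and `g ≥ 1`, the coinvariants `(H^{⊗n})_{D_{2n}}` form a free
`ℤ`-module of rank `(1/2)·N_{2g}(n) + (1/4)·(2g+1)·(2g)^{n/2}`, where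
`N_q(n) = (1/n)·Σ_{d∣n} φ(d)·q^{n/d}`.  (The rank identity is stated multiplied
through by `4n` to avoid denominators.) -/
theorem stmt_0 (g n : ℕ) (hg : 1 ≤ g) (hn : 2 ≤ n) (hev : Even n) :
    Module.Free ℤ (DCoinv g n) ∧
    4 * n * Module.finrank ℤ (DCoinv g n) =
      2 * (∑ d ∈ n.divisors, d.totient * (2 * g) ^ (n / d)) +
        n * (2 * g + 1) * (2 * g) ^ (n / 2) := by
  have : NeZero n := ⟨by omega⟩
  let bracelet_basis : Module.Basis (Bracelet n (Fin (2 * g))) ℤ (DCoinv g n) :=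
    .ofRepr (dCoinvEquivBracelet g hev)
  refine ⟨.of_basis bracelet_basis, ?_⟩
  rw [Module.finrank_eq_nat_card_basis bracelet_basis, four_mul_natCard_bracelet hev, Nat.card_fin]
end

section
/- Let n ≥ 3 be odd and g ≥ 1. Then the torsion subgroup of (H^{⊗n})_{D_{2n}} is isomorphic to (ℤ/2ℤ)^{(2g)^{(n+1)/2}}; equivalently, it is isomorphic to H^{⊗(n+1)/2} ⊗ ℤ/2ℤ. -/
/-!
Modulo rotations, `H^{⊗n}` becomes the free `ℤ`-module on necklaces, and for odd `n` the reversal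
acts on it by `q ↦ -σ q` for an involution `σ` of the set of necklaces. In the coinvariants, a pair
`{q, σ q}` with `q ≠ σ q` contributes a summand `ℤ`, and a fixed point of `σ` a summand `ℤ/2ℤ`. As
`2` is invertible modulo `n`, each necklace fixed by `σ` contains exactly one palindrome, and a
palindrome is determined by its first `(n + 1) / 2` letters.
-/

open Function

/-- The torsion submodule of a module that splits as a torsion-free module times a torsion one. -/
noncomputable def torsionEquivOfEquivProd {R M F T : Type*} [CommRing R] [AddCommGroup M]
    [AddCommGroup F] [AddCommGroup T] [Module R M] [Module R F] [Module R T]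
    [Module.IsTorsionFree R F] (hT : Module.IsTorsion R T) (e : M ≃ₗ[R] F × T) :
    Submodule.torsion R M ≃ₗ[R] T :=
  LinearEquiv.ofBijective (LinearMap.snd R F T ∘ₗ e.toLinearMap ∘ₗ (Submodule.torsion R M).subtype)
    ⟨by
      rw [injective_iff_map_eq_zero]
      rintro ⟨x, a, hax⟩ hsnd
      have hfst : (e x).1 = 0 := by
        have hae : (a : R) • (e x).1 = 0 := by
          rw [← Prod.smul_fst, ← map_smul, ← Submonoid.smul_def, hax, map_zero, Prod.fst_zero]
        exact (isRegular_iff_mem_nonZeroDivisors.mpr a.2).isSMulRegular.right_eq_zero_of_smul hae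
      exact Subtype.ext (e.map_eq_zero_iff.mp (Prod.ext hfst hsnd)),
    fun t ↦ by
      obtain ⟨a, hat⟩ := @hT t
      refine ⟨⟨e.symm (0, t), a, ?_⟩, by simp⟩
      rw [Submonoid.smul_def, ← map_smul, Prod.smul_mk, smul_zero, ← Submonoid.smul_def, hat,
        Prod.mk_zero_zero, map_zero]⟩

theorem isTorsion_int_of_zmod (n : ℕ) [NeZero n] {M : Type*} [AddCommGroup M] [Module (ZMod n) M] :
    Module.IsTorsion ℤ M := fun x ↦
  ⟨⟨n, mem_nonZeroDivisors_of_ne_zero (NeZero.ne _)⟩, by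
    rw [Submonoid.mk_smul, natCast_zsmul, ZModModule.char_nsmul_eq_zero]⟩

theorem finsupp_zmod_hom_ext {ι N : Type*} [AddCommGroup N] {n : ℕ}
    {f f' : (ι →₀ ZMod n) →ₗ[ℤ] N}
    (h : ∀ i, f (Finsupp.single i 1) = f' (Finsupp.single i 1)) : f = f' :=
  Finsupp.lhom_ext fun i a ↦ by
    obtain ⟨k, rfl⟩ := ZMod.intCast_surjective a
    rw [← zsmul_one, ← Finsupp.smul_single, map_zsmul, map_zsmul, h]

/-- The coinvariants of `ℤ[Q]` under the sign-twisted action `q ↦ -σ q` of a self-map `σ` of `Q`. -/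
abbrev SignedCoinv {Q : Type*} (σ : Q → Q) : Type _ :=
  (Q →₀ ℤ) ⧸ Submodule.span ℤ (Set.range fun q ↦ Finsupp.single (σ q) (1 : ℤ) + Finsupp.single q 1)

namespace SignedCoinv

section Lift

variable {Q N : Type*} [AddCommGroup N] {σ : Q → Q}

/-- The class of a basis element. -/
noncomputable def mk (σ : Q → Q) (q : Q) : SignedCoinv σ :=
  Submodule.Quotient.mk (Finsupp.single q 1)

theorem mk_map (q : Q) : mk σ (σ q) = -mk σ q := by
  rw [eq_neg_iff_add_eq_zero, mk, mk, ← Submodule.Quotient.mk_add, Submodule.Quotient.mk_eq_zero]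
  exact Submodule.subset_span ⟨q, rfl⟩

theorem two_zsmul_mk_of_isFixedPt {q : Q} (hq : IsFixedPt σ q) : (2 : ℤ) • mk σ q = 0 := by
  rw [two_zsmul, ← eq_neg_iff_add_eq_zero, ← mk_map, hq.eq]

/-- The universal property of the signed coinvariants. -/
noncomputable def lift (f : Q → N) (hf : ∀ q, f (σ q) = -f q) : SignedCoinv σ →ₗ[ℤ] N :=
  Submodule.liftQ _ (Finsupp.linearCombination ℤ f) <| by
    rw [Submodule.span_le]
    rintro _ ⟨q, rfl⟩
    simp [hf]

@[simp]
theorem lift_mk (f : Q → N) (hf : ∀ q, f (σ q) = -f q) (q : Q) : lift f hf (mk σ q) = f q := by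
  simp [lift, mk]

theorem hom_ext {f f' : SignedCoinv σ →ₗ[ℤ] N} (h : ∀ q, f (mk σ q) = f' (mk σ q)) : f = f' :=
  Submodule.linearMap_qext _ <| Finsupp.lhom_ext' fun q ↦ LinearMap.ext_ring (h q)

/-- The inclusion of the summands `ℤ/2ℤ` spanned by the classes of the fixed points of `σ`. -/
noncomputable def ofFixedPoints (σ : Q → Q) : (fixedPoints σ →₀ ZMod 2) →ₗ[ℤ] SignedCoinv σ :=
  Finsupp.lsum ℤ fun p ↦ (ZMod.lift 2 ⟨zmultiplesHom _ (mk σ p), by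
    simpa using two_zsmul_mk_of_isFixedPt p.2⟩).toIntLinearMap

theorem ofFixedPoints_single (p : fixedPoints σ) :
    ofFixedPoints σ (Finsupp.single p 1) = mk σ p := by
  have hlift := ZMod.lift_coe 2 ⟨zmultiplesHom _ (mk σ p), by
    simpa using two_zsmul_mk_of_isFixedPt p.2⟩ 1
  simpa [ofFixedPoints] using hlift

end Lift

section Splitting

variable {Q : Type*} [LinearOrder Q] {σ : Q → Q}

/-- The components of the class of `q`: the smaller element of each two-element orbit is the chosen
generator of a copy of `ℤ`, the larger one being its negative, and each fixed point generates a copy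
of `ℤ/2ℤ`. -/
noncomputable def splitFun (hσ : Involutive σ) (q : Q) :
    ({q // q < σ q} →₀ ℤ) × (fixedPoints σ →₀ ZMod 2) :=
  if hlt : q < σ q then (Finsupp.single ⟨q, hlt⟩ 1, 0)
  else if hgt : σ q < q then (-Finsupp.single ⟨σ q, by rwa [hσ q]⟩ 1, 0)
  else (0, Finsupp.single ⟨q, le_antisymm (not_lt.mp hlt) (not_lt.mp hgt)⟩ 1)

theorem splitFun_of_lt (hσ : Involutive σ) {q : Q} (hq : q < σ q) :
    splitFun hσ q = (Finsupp.single ⟨q, hq⟩ 1, 0) := dif_pos hq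

theorem splitFun_of_gt (hσ : Involutive σ) {q : Q} (hq : σ q < q) :
    splitFun hσ q = (-Finsupp.single ⟨σ q, by rwa [hσ q]⟩ 1, 0) := by
  rw [splitFun, dif_neg hq.not_gt, dif_pos hq]

theorem splitFun_of_isFixedPt (hσ : Involutive σ) {q : Q} (hq : IsFixedPt σ q) :
    splitFun hσ q = (0, Finsupp.single ⟨q, hq⟩ 1) := by
  simp [splitFun, hq.eq]

theorem splitFun_map_of_lt (hσ : Involutive σ) {q : Q} (hq : q < σ q) :
    splitFun hσ (σ q) = -splitFun hσ q := by
  simp [splitFun, hσ q, hq, hq.not_gt]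

theorem splitFun_map (hσ : Involutive σ) (q : Q) : splitFun hσ (σ q) = -splitFun hσ q := by
  rcases lt_trichotomy q (σ q) with hlt | heq | hgt
  · exact splitFun_map_of_lt hσ hlt
  · rw [← heq, splitFun_of_isFixedPt hσ heq.symm, Prod.neg_mk, neg_zero, ← Finsupp.single_neg,
      ZMod.neg_eq_self_mod_two]
  · have hneg := splitFun_map_of_lt hσ (q := σ q) (by rwa [hσ q])
    rw [hσ q] at hneg
    rw [hneg, neg_neg]

/-- The splitting of the signed coinvariants of an involution into a free part and a `2`-torsion
part. -/
noncomputable def equivProd (hσ : Involutive σ) :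
    SignedCoinv σ ≃ₗ[ℤ] ({q // q < σ q} →₀ ℤ) × (fixedPoints σ →₀ ZMod 2) :=
  LinearEquiv.ofLinearMap (lift (splitFun hσ) (splitFun_map hσ))
    ((Finsupp.linearCombination ℤ fun q : {q // q < σ q} ↦ mk σ q).coprod (ofFixedPoints σ))
    (by
      refine LinearMap.prod_ext ?_ ?_
      · ext1 q
        refine LinearMap.ext_ring ?_
        simp [splitFun_of_lt hσ q.2]
      · refine finsupp_zmod_hom_ext fun p ↦ ?_
        simp [ofFixedPoints_single, splitFun_of_isFixedPt hσ p.2])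
    (hom_ext fun q ↦ by
      rcases lt_trichotomy q (σ q) with hlt | heq | hgt
      · simp [splitFun_of_lt hσ hlt]
      · simp [splitFun_of_isFixedPt hσ heq.symm, ofFixedPoints_single]
      · simp [splitFun_of_gt hσ hgt, mk_map])

end Splitting

end SignedCoinv

theorem exists_nsmul_two_nsmul_eq {M : Type*} [AddMonoid M] {k : M} (hk : Odd (addOrderOf k)) :
    ∃ m : ℕ, m • 2 • k = k :=
  exists_nsmul_eq_self_of_coprime hk.coprime_two_left

section Necklace

variable {A α : Type*} [AddCommGroup A]

/-- The word `w` moved by `k` places, for words indexed by an abelian group. -/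
def translateWord (k : A) (w : A → α) (i : A) : α := w (i - k)

/-- The word `w` read backwards, with its `i`-th letter moved to place `c - i`. -/
def reflectWord (c : A) (w : A → α) (i : A) : α := w (c - i)

theorem reflectWord_involutive (c : A) : Involutive (reflectWord c : (A → α) → A → α) := fun w ↦
  funext fun i ↦ by simp [reflectWord]

theorem reflectWord_translateWord (c k : A) (w : A → α) :
    reflectWord c (translateWord k w) = translateWord (-k) (reflectWord c w) := by
  funext i
  simp only [reflectWord, translateWord]
  congr 1
  abel

theorem translateWord_zero (w : A → α) : translateWord 0 w = w :=
  funext fun i ↦ by rw [translateWord, sub_zero]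

theorem translateWord_translateWord (k l : A) (w : A → α) :
    translateWord k (translateWord l w) = translateWord (k + l) w := by
  funext i
  simp only [translateWord, sub_sub]

theorem periodic_two_nsmul_of_isFixedPt_reflectWord {c k : A} {w : A → α}
    (hw : IsFixedPt (reflectWord c) w) (hkw : IsFixedPt (reflectWord c) (translateWord k w)) :
    Periodic w (2 • k) := fun i ↦ by
  have hw' := congrFun hw (i + 2 • k)
  have hkw' := congrFun hkw (i + k)
  simp only [reflectWord, translateWord, add_sub_cancel_right] at hw' hkw'
  rw [← hw', ← hkw']
  congr 1
  abel

variable (A α) in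
/-- The equivalence of words up to translation. -/
def translationSetoid : Setoid (A → α) where
  r w w' := ∃ k, translateWord k w = w'
  iseqv :=
    { refl := fun w ↦ ⟨0, translateWord_zero w⟩
      symm := by
        rintro w _ ⟨k, rfl⟩
        exact ⟨-k, by rw [translateWord_translateWord, neg_add_cancel, translateWord_zero]⟩
      trans := by
        rintro w _ _ ⟨k, rfl⟩ ⟨l, rfl⟩
        exact ⟨l + k, (translateWord_translateWord l k w).symm⟩ }

variable (A α) in
/-- Necklaces: words indexed by an abelian group `A`, up to translation. For `A = ℤ/nℤ` these are
the words of length `n` up to rotation. -/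
abbrev Necklace : Type _ := Quotient (translationSetoid A α)

namespace Necklace

/-- The necklace of a word. -/
def mk (w : A → α) : Necklace A α := Quotient.mk _ w

theorem mk_surjective : Surjective (mk : (A → α) → Necklace A α) := Quotient.mk_surjective

theorem mk_eq_mk_iff {w w' : A → α} : mk w = mk w' ↔ ∃ k, translateWord k w = w' :=
  Quotient.eq

theorem mk_translateWord (k : A) (w : A → α) : mk (translateWord k w) = mk w :=
  (mk_eq_mk_iff.mpr ⟨k, rfl⟩).symm

/-- The function on necklaces induced by a translation-invariant function on words. -/
def lift {β : Type*} (f : (A → α) → β) (hf : ∀ k w, f (translateWord k w) = f w) :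
    Necklace A α → β :=
  Quotient.lift f <| by
    rintro w _ ⟨k, rfl⟩
    exact (hf k w).symm

@[simp]
theorem lift_mk {β : Type*} (f : (A → α) → β) (hf : ∀ k w, f (translateWord k w) = f w)
    (w : A → α) : lift f hf (mk w) = f w := rfl

/-- The action of `reflectWord c` on necklaces. -/
def reflect (c : A) : Necklace A α → Necklace A α :=
  lift (fun w ↦ mk (reflectWord c w)) fun k w ↦ by
    rw [reflectWord_translateWord, mk_translateWord]

theorem reflect_mk (c : A) (w : A → α) : reflect c (mk w) = mk (reflectWord c w) := rfl

theorem reflect_involutive (c : A) : Involutive (reflect c : Necklace A α → Necklace A α) :=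
  mk_surjective.forall.mpr fun w ↦ by rw [reflect_mk, reflect_mk, reflectWord_involutive c w]

theorem injOn_mk_fixedPoints (hA : ∀ a : A, Odd (addOrderOf a)) (c : A) :
    Set.InjOn mk (fixedPoints (reflectWord c : (A → α) → A → α)) := by
  intro w hw w' hw' hww'
  obtain ⟨k, rfl⟩ := mk_eq_mk_iff.mp hww'
  obtain ⟨m, hm⟩ := exists_nsmul_two_nsmul_eq (hA k)
  have hperiod : Periodic w k := hm ▸ (periodic_two_nsmul_of_isFixedPt_reflectWord hw hw').nsmul m
  exact funext fun i ↦ (hperiod.sub_eq i).symm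

theorem surjOn_mk_fixedPoints (hA : ∀ a : A, Odd (addOrderOf a)) (c : A) :
    Set.SurjOn mk (fixedPoints (reflectWord c : (A → α) → A → α)) (fixedPoints (reflect c)) := by
  intro q hq
  obtain ⟨w, rfl⟩ := mk_surjective q
  obtain ⟨k, hk⟩ := mk_eq_mk_iff.mp hq
  obtain ⟨l, rfl⟩ : ∃ l, l + l = k := by
    obtain ⟨m, hm⟩ := exists_nsmul_two_nsmul_eq (hA k)
    exact ⟨m • k, by rwa [← two_nsmul, smul_comm]⟩
  refine ⟨translateWord (-l) w, funext fun i ↦ ?_, mk_translateWord _ w⟩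
  have hwi := congrFun hk (i + l)
  simp only [reflectWord, translateWord, sub_neg_eq_add] at hwi ⊢
  rw [← hwi]
  congr 1
  abel

theorem bijOn_mk_fixedPoints (hA : ∀ a : A, Odd (addOrderOf a)) (c : A) :
    Set.BijOn mk (fixedPoints (reflectWord c : (A → α) → A → α)) (fixedPoints (reflect c)) :=
  ⟨fun _ hw ↦ congrArg mk hw, injOn_mk_fixedPoints hA c, surjOn_mk_fixedPoints hA c⟩

end Necklace

end Necklace

section Palindrome

variable {α : Type*} (m : ℕ)

theorem val_neg_one_sub {n : ℕ} (i : ZMod (n + 1)) : (-1 - i).val = n - i.val := by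
  have hle : i.val ≤ (-1 : ZMod (n + 1)).val :=
    (ZMod.val_neg_one n).symm ▸ Nat.le_of_lt_succ (ZMod.val_lt i)
  rw [ZMod.val_sub hle, ZMod.val_neg_one]

/-- A palindrome of length `2 * m + 1` is determined by its first `m + 1` letters. -/
def palindromeEquiv :
    fixedPoints (reflectWord (-1) : (ZMod (2 * m + 1) → α) → _) ≃ (Fin (m + 1) → α) where
  toFun w j := w.1 (j : ℕ)
  invFun u := ⟨fun i ↦ u ⟨min i.val (2 * m - i.val), by omega⟩, funext fun i ↦ by
    have hi := ZMod.val_lt i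
    simp only [reflectWord, val_neg_one_sub]
    congr 2
    omega⟩
  left_inv := by
    rintro ⟨w, hw⟩
    ext i
    rcases le_total i.val (2 * m - i.val) with hle | hge
    · simp [min_eq_left hle]
    · simp only [min_eq_right hge]
      rw [← val_neg_one_sub, ZMod.natCast_zmod_val]
      exact congrFun hw i
  right_inv u := by
    ext j
    have hj : ((j : ℕ) : ZMod (2 * m + 1)).val = j := ZMod.val_cast_of_lt (by omega)
    simp only [hj]
    congr 1
    ext
    simp only
    omega

theorem odd_addOrderOf_zmod {n : ℕ} (hn : Odd n) (a : ZMod n) : Odd (addOrderOf a) :=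
  hn.of_dvd_nat (by simpa using addOrderOf_dvd_natCard a)

theorem card_fixedPoints_reflect :
    Nat.card (fixedPoints (Necklace.reflect (-1) : Necklace (ZMod (2 * m + 1)) α → _)) =
      Nat.card α ^ (m + 1) := by
  have hbij := Necklace.bijOn_mk_fixedPoints (α := α)
    (odd_addOrderOf_zmod (odd_two_mul_add_one m)) (-1)
  rw [← Nat.card_congr (hbij.equiv _), Nat.card_congr (palindromeEquiv m), Nat.card_fun,
    Nat.card_fin]

end Palindrome

namespace DCoinv

section Lift

variable {g n : ℕ} {N : Type*} [AddCommGroup N]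

/-- The class of a basis tensor. -/
noncomputable def mk (w : DWord g n) : DCoinv g n :=
  Submodule.Quotient.mk (Finsupp.single w 1)

theorem hom_ext {f f' : DCoinv g n →ₗ[ℤ] N} (h : ∀ w, f (mk w) = f' (mk w)) : f = f' :=
  Submodule.linearMap_qext _ <| Finsupp.lhom_ext' fun w ↦ LinearMap.ext_ring (h w)

theorem rotMap_single (w : DWord g n) (c : ℤ) :
    rotMap g n (Finsupp.single w c) = Finsupp.single (translateWord 1 w) c := by
  rw [rotMap, Finsupp.lmapDomain_apply, Finsupp.mapDomain_single]
  rfl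

theorem revMap_single (hn : Odd n) (w : DWord g n) (c : ℤ) :
    revMap g n (Finsupp.single w c) = -Finsupp.single (reflectWord (-1) w) c := by
  have hreflect : (fun i ↦ w (-i - 1)) = reflectWord (-1) w :=
    funext fun i ↦ congrArg w (neg_sub_comm i 1)
  rw [revMap, hn.neg_one_pow, neg_one_smul, LinearMap.neg_apply, Finsupp.lmapDomain_apply,
    Finsupp.mapDomain_single, hreflect]

theorem mk_translateWord_one (w : DWord g n) : mk (translateWord 1 w) = mk w := by
  rw [eq_comm, mk, mk, Submodule.Quotient.eq]
  refine Submodule.subset_span ⟨1, Finsupp.single w 1, Or.inl ?_⟩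
  rw [pow_one, rotMap_single]

theorem mk_translateWord [NeZero n] (k : ZMod n) (w : DWord g n) :
    mk (translateWord k w) = mk w := by
  rw [← ZMod.natCast_zmod_val k]
  induction k.val with
  | zero => rw [Nat.cast_zero, translateWord_zero]
  | succ j ih =>
    rw [Nat.cast_succ, add_comm, ← translateWord_translateWord, mk_translateWord_one, ih]

theorem mk_reflectWord (hn : Odd n) (w : DWord g n) : mk (reflectWord (-1) w) = -mk w := by
  rw [eq_neg_iff_add_eq_zero, add_comm, mk, mk, ← Submodule.Quotient.mk_add,
    Submodule.Quotient.mk_eq_zero]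
  refine Submodule.subset_span ⟨0, Finsupp.single w 1, Or.inr ?_⟩
  rw [pow_zero, one_mul, revMap_single hn, sub_neg_eq_add]

theorem linearCombination_rotMap_pow {f : DWord g n → N} (hrot : ∀ w, f (translateWord 1 w) = f w)
    (k : ℕ) (v : DWord g n →₀ ℤ) :
    Finsupp.linearCombination ℤ f ((rotMap g n ^ k) v) = Finsupp.linearCombination ℤ f v := by
  have hcomp : Finsupp.linearCombination ℤ f ∘ₗ rotMap g n = Finsupp.linearCombination ℤ f :=
    Finsupp.lhom_ext fun w c ↦ by simp [rotMap_single, hrot]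
  induction k with
  | zero => rfl
  | succ k ih => rw [pow_succ', Module.End.mul_apply, ← LinearMap.comp_apply, hcomp, ih]

theorem linearCombination_revMap (hn : Odd n) {f : DWord g n → N}
    (hrev : ∀ w, f (reflectWord (-1) w) = -f w) (v : DWord g n →₀ ℤ) :
    Finsupp.linearCombination ℤ f (revMap g n v) = Finsupp.linearCombination ℤ f v := by
  have hcomp : Finsupp.linearCombination ℤ f ∘ₗ revMap g n = Finsupp.linearCombination ℤ f :=
    Finsupp.lhom_ext fun w c ↦ by simp [revMap_single hn, hrev]
  exact LinearMap.congr_fun hcomp v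

/-- The universal property of the dihedral coinvariants in odd degree. -/
noncomputable def lift (hn : Odd n) (f : DWord g n → N) (hrot : ∀ w, f (translateWord 1 w) = f w)
    (hrev : ∀ w, f (reflectWord (-1) w) = -f w) : DCoinv g n →ₗ[ℤ] N :=
  Submodule.liftQ _ (Finsupp.linearCombination ℤ f) <| by
    rw [dihedralAug, Submodule.span_le]
    rintro _ ⟨k, v, rfl | rfl⟩ <;>
      simp [linearCombination_rotMap_pow hrot, linearCombination_revMap hn hrev]

@[simp]
theorem lift_mk (hn : Odd n) (f : DWord g n → N) (hrot : ∀ w, f (translateWord 1 w) = f w)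
    (hrev : ∀ w, f (reflectWord (-1) w) = -f w) (w : DWord g n) :
    lift hn f hrot hrev (mk w) = f w := by
  simp [lift, mk]

end Lift

section Necklace

variable (g : ℕ) {n : ℕ}

/-- Taking coinvariants in two steps, first under rotations and then under reversal. -/
noncomputable def equivSignedCoinv (hn : Odd n) :
    DCoinv g n ≃ₗ[ℤ]
      SignedCoinv (Necklace.reflect (-1) : Necklace (ZMod n) (Fin (2 * g)) → _) :=
  have : NeZero n := ⟨hn.pos.ne'⟩
  LinearEquiv.ofLinearMap
    (lift hn (fun w ↦ SignedCoinv.mk _ (Necklace.mk w))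
      (fun w ↦ by rw [Necklace.mk_translateWord])
      (fun w ↦ by rw [← Necklace.reflect_mk, SignedCoinv.mk_map]))
    (SignedCoinv.lift (Necklace.lift mk mk_translateWord) <| Necklace.mk_surjective.forall.mpr
      fun w ↦ by simp [Necklace.reflect_mk, mk_reflectWord hn])
    (SignedCoinv.hom_ext <| Necklace.mk_surjective.forall.mpr fun w ↦ by simp)
    (hom_ext fun w ↦ by simp)

end Necklace

end DCoinv

/-- For `n ≥ 3` odd and `g ≥ 1`, the torsion subgroup of `(H^{⊗n})_{D_{2n}}` is
isomorphic to `(ℤ/2ℤ)^{(2g)^{(n+1)/2}}`, equivalently to `H^{⊗(n+1)/2} ⊗ ℤ/2ℤ`. -/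
theorem stmt_2 (g n : ℕ) (hg : 1 ≤ g) (hn : 3 ≤ n) (hodd : Odd n) :
    Nonempty ((Submodule.torsion ℤ (DCoinv g n)) ≃ₗ[ℤ]
      (Fin ((2 * g) ^ ((n + 1) / 2)) → ZMod 2)) := by
  obtain ⟨m, rfl⟩ := hodd
  rw [show (2 * m + 1 + 1) / 2 = m + 1 by omega]
  let : LinearOrder (Necklace (ZMod (2 * m + 1)) (Fin (2 * g))) :=
    IsWellOrder.linearOrder WellOrderingRel
  let split := (DCoinv.equivSignedCoinv g (odd_two_mul_add_one m)).trans
    (SignedCoinv.equivProd (Necklace.reflect_involutive (-1)))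
  have hcard := card_fixedPoints_reflect m (α := Fin (2 * g))
  rw [Nat.card_fin] at hcard
  exact ⟨(torsionEquivOfEquivProd (isTorsion_int_of_zmod 2) split).trans <|
    (Finsupp.domLCongr (Finite.equivFinOfCardEq hcard)).trans
      (Finsupp.linearEquivFunOnFinite ℤ (ZMod 2) _)⟩
end
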